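/- Let L be a directly irreducible modular ortholattice of finite dimension d ≥ 2. If some interval [0,a] of L of dimension 2 is finite, then L is finite. -/

import Mathlib

universe u

/-- An ortholattice: a bounded lattice with an order-reversing involution `x ↦ x′`
satisfying `x ⊓ x′ = ⊥` and `x ⊔ x′ = ⊤`. -/
class Ortholattice (α : Type*) extends Lattice α, BoundedOrder α where
  compl : α → α
  compl_antitone : ∀ x y : α, x ≤ y → compl y ≤ compl x
  compl_compl : ∀ x : α, compl (compl x) = x
  inf_compl : ∀ x : α, x ⊓ compl x = ⊥
  sup_compl : ∀ x : α, x ⊔ compl x = ⊤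

postfix:max "′" => Ortholattice.compl

/-- The direct product of two ortholattices. -/
instance Ortholattice.prod (α β : Type*) [Ortholattice α] [Ortholattice β] :
    Ortholattice (α × β) where
  compl p := (p.1′, p.2′)
  compl_antitone x y h := ⟨compl_antitone _ _ h.1, compl_antitone _ _ h.2⟩
  compl_compl x := by cases x; simp [compl_compl]
  inf_compl x := by cases x; rw [Prod.mk_inf_mk]; simp [inf_compl]; rfl
  sup_compl x := by cases x; rw [Prod.mk_sup_mk]; simp [sup_compl]; rfl

/-- An isomorphism of ortholattices: an order isomorphism commuting with
orthocomplementation. -/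
structure OLIso (α β : Type*) [Ortholattice α] [Ortholattice β] extends α ≃ β where
  map_rel : ∀ x y : α, x ≤ y ↔ toFun x ≤ toFun y
  map_compl : ∀ x : α, toFun x′ = (toFun x)′

/-- An ortholattice is directly irreducible if it is nontrivial and not isomorphic to a
direct product of two nontrivial ortholattices. -/
def DirectlyIrreducible (α : Type u) [Ortholattice α] : Prop :=
  Nontrivial α ∧ ∀ (β γ : Type u) [Ortholattice β] [Ortholattice γ],
    Nontrivial β → Nontrivial γ → IsEmpty (OLIso α (β × γ))

/-- A lattice has finite dimension `d` if some maximal chain has exactly `d + 1` elements. -/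
def HasDim (α : Type*) [Lattice α] (d : ℕ) : Prop :=
  ∃ s : Set α, IsMaxChain (· ≤ ·) s ∧ s.ncard = d + 1

namespace MolAux

open Ortholattice

section gen
set_option linter.unusedSectionVars false
variable {α : Type*} [Lattice α] [BoundedOrder α] [IsModularLattice α]

theorem atom_inf {p x : α} (hp : IsAtom p) (h : ¬ p ≤ x) : p ⊓ x = ⊥ := by
  rcases hp.le_iff.1 (inf_le_left : p ⊓ x ≤ p) with h1 | h1
  · exact h1
  · exact absurd (inf_eq_left.1 h1) h

theorem acc_step {c d : α} (hcd : c ⋖ d) (hc : Acc (· < ·) c) : Acc (· < ·) d := by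
  have hle : ∀ x, x ≤ c → Acc (· < ·) x := by
    intro x hx
    rcases hx.lt_or_eq with h | h
    · exact hc.inv h
    · exact h ▸ hc
  have key : ∀ z : α, Acc (· < ·) z → ∀ y, y ≤ d → y ⊓ c = z → Acc (· < ·) y := by
    intro z hz
    induction hz with
    | intro z _ ih =>
      intro y hy hyz
      refine Acc.intro y fun y2 h2 => ?_
      have h3 : y2 ⊓ c ≤ y ⊓ c := inf_le_inf_right c h2.le
      rcases h3.lt_or_eq with h | h
      · exact ih (y2 ⊓ c) (hyz ▸ h) y2 (h2.le.trans hy) rfl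
      · apply hle
        have h4 : y2 ⊔ c < y ⊔ c := by
          refine lt_of_le_of_ne (sup_le_sup_right h2.le c) fun h5 => ?_
          exact h2.ne (eq_of_le_of_inf_le_of_sup_le h2.le h.ge h5.ge)
        have h5 : y2 ⊔ c < d := h4.trans_le (sup_le hy hcd.le)
        have h6 : ¬ c < y2 ⊔ c := fun h7 => hcd.2 h7 h5
        by_contra h8
        exact h6 (right_lt_sup.2 h8)
  exact key _ (hle _ inf_le_right) d le_rfl rfl

theorem wf_of_dim {d : ℕ} (h : HasDim α d) : WellFoundedLT α := by
  obtain ⟨C, hC, hcard⟩ := h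
  have hfin : C.Finite := Set.finite_of_ncard_ne_zero (by omega)
  have hbot : (⊥ : α) ∈ C := hC.bot_mem
  have htop : (⊤ : α) ∈ C := hC.top_mem
  have hacc : Acc (· < ·) (⊤ : α) := by
    have hf1 : {c ∈ C | Acc (· < ·) c}.Finite := hfin.subset (Set.sep_subset _ _)
    obtain ⟨m, hm⟩ := hf1.exists_maximal
      ⟨⊥, hbot, Acc.intro _ fun y hy => absurd hy not_lt_bot⟩
    by_cases hmt : m = ⊤
    · exact hmt ▸ hm.1.2
    exfalso
    have hf2 : {c ∈ C | m < c}.Finite := hfin.subset (Set.sep_subset _ _)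
    obtain ⟨n, hn⟩ := hf2.exists_minimal ⟨⊤, htop, lt_top_iff_ne_top.2 hmt⟩
    have hcov : m ⋖ n := by
      refine ⟨hn.1.2, fun x hmx hxn => ?_⟩
      have hch : IsChain (· ≤ ·) (insert x C) := by
        refine hC.1.insert fun b hb hne => ?_
        rcases hC.1.total hb hm.1.1 with h | h
        · exact Or.inr (h.trans hmx.le)
        · rcases h.lt_or_eq with h | h
          · have : n ≤ b := by
              rcases hC.1.total hb hn.1.1 with h' | h'
              · exact hn.2 ⟨hb, h⟩ h'
              · exact h'
            exact Or.inl (hxn.le.trans this)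
          · exact Or.inr (h ▸ hmx.le)
      have hx : x ∈ C := by
        rw [hC.2 hch (Set.subset_insert x C)]
        exact Set.mem_insert x C
      exact absurd (hn.2 ⟨hx, hmx⟩ hxn.le) (not_le_of_gt hxn)
    have := hm.2 ⟨hn.1.1, acc_step hcov hm.1.2⟩ hcov.le
    exact absurd this (not_le_of_gt hcov.lt)
  refine ⟨⟨fun x => ?_⟩⟩
  rcases (le_top : x ≤ ⊤).lt_or_eq with h | h
  · exact hacc.inv h
  · exact h ▸ hacc

theorem exch {p q r : α} (hp : IsAtom p) (hq : IsAtom q) (hr : IsAtom r) (h : r ≤ p ⊔ q)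
    (hne : r ≠ p) : p ⊔ r = p ⊔ q := by
  have hpq : p ≠ q := by
    rintro rfl
    rw [sup_idem] at h
    exact hne ((hp.le_iff_eq hr.1).1 h)
  have hcov : p ⋖ p ⊔ q := by
    apply covBy_sup_of_inf_covBy_right
    rw [(hp.disjoint_of_ne hq hpq).eq_bot]
    exact hq.bot_covBy
  have h1 : p < p ⊔ r := left_lt_sup.2 fun h => hne ((hp.le_iff_eq hr.1).1 h)
  rcases (sup_le le_sup_left h : p ⊔ r ≤ p ⊔ q).lt_or_eq with h2 | h2
  · exact absurd h2 (hcov.2 h1)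
  · exact h2

def Persp (p q : α) : Prop := ∃ t, p ⊓ t = ⊥ ∧ q ⊓ t = ⊥ ∧ p ⊔ t = p ⊔ q ∧ q ⊔ t = p ⊔ q

theorem Persp.symm {p q : α} (h : Persp p q) : Persp q p := by
  obtain ⟨t, h1, h2, h3, h4⟩ := h
  exact ⟨t, h2, h1, by rw [h4, sup_comm], by rw [h3, sup_comm]⟩

theorem Persp.refl (p : α) : Persp p p := ⟨⊥, by simp⟩

theorem meet_lines {p q r : α} (hr : IsAtom r) (h : ¬ r ≤ p ⊔ q) :
    (p ⊔ q) ⊓ (q ⊔ r) = q := by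
  rw [inf_comm, sup_inf_assoc_of_le r (le_sup_right : q ≤ p ⊔ q), atom_inf hr h, sup_bot_eq]

theorem tri {p q r u v : α} (hr : IsAtom r) (h : ¬ r ≤ p ⊔ q)
    (u1 : p ⊓ u = ⊥) (u3 : u ≤ p ⊔ q) (v1 : q ⊓ v = ⊥) (v3 : v ≤ q ⊔ r) : p ⊓ (u ⊔ v) = ⊥ := by
  have e1 : v ⊓ (p ⊔ q) = ⊥ := by
    rw [← le_bot_iff, ← v1]
    refine le_inf ?_ inf_le_left
    conv_rhs => rw [← meet_lines hr h]
    exact le_inf inf_le_right (inf_le_left.trans v3)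
  have e2 : (u ⊔ v) ⊓ (p ⊔ q) = u := by
    rw [sup_inf_assoc_of_le v u3, e1, sup_bot_eq]
  rw [← le_bot_iff, ← u1]
  refine le_inf inf_le_left ?_
  conv_rhs => rw [← e2]
  exact le_inf inf_le_right (inf_le_left.trans le_sup_left)

theorem Persp.trans {p q r : α} (hp : IsAtom p) (hq : IsAtom q) (hr : IsAtom r)
    (h1 : Persp p q) (h2 : Persp q r) : Persp p r := by
  by_cases hpq : p = q
  · exact hpq ▸ h2
  by_cases hqr : q = r
  · exact hqr ▸ h1
  by_cases hpr : p = r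
  · exact hpr ▸ Persp.refl p
  by_cases hcol : r ≤ p ⊔ q
  · have e1 : p ⊔ r = p ⊔ q := exch hp hq hr hcol (Ne.symm hpr)
    have e2 : q ⊔ r = q ⊔ p := exch hq hp hr (by rwa [sup_comm]) (Ne.symm hqr)
    refine ⟨q, (hp.disjoint_of_ne hq hpq).eq_bot, (hr.disjoint_of_ne hq (Ne.symm hqr)).eq_bot,
      e1.symm, ?_⟩
    rw [sup_comm, e2, e1, sup_comm]
  have hcol2 : ¬ p ≤ r ⊔ q := by
    intro h
    have e2 : q ⊔ p = q ⊔ r := exch hq hr hp (by rwa [sup_comm]) hpq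
    apply hcol
    rw [sup_comm, e2]
    exact le_sup_right
  obtain ⟨u, u1, u2, u3, u4⟩ := h1
  obtain ⟨v, v1, v2, v3, v4⟩ := h2
  have ule : u ≤ p ⊔ q := u3 ▸ le_sup_right
  have vle : v ≤ q ⊔ r := v3 ▸ le_sup_right
  have a1 : p ⊓ (u ⊔ v) = ⊥ := tri hr hcol u1 ule v1 vle
  have a2 : r ⊓ (v ⊔ u) = ⊥ :=
    tri hp hcol2 v2 (by rwa [sup_comm]) u2 (by rwa [sup_comm])
  refine ⟨(u ⊔ v) ⊓ (p ⊔ r), ?_, ?_, ?_, ?_⟩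
  · rw [← inf_assoc, a1, bot_inf_eq]
  · rw [← inf_assoc, sup_comm u v, a2, bot_inf_eq]
  · rw [← sup_inf_assoc_of_le (u ⊔ v) (le_sup_left : p ≤ p ⊔ r), ← sup_assoc, u3, sup_assoc, v3]
    exact inf_eq_right.2 (sup_le le_sup_left (le_sup_right.trans le_sup_right))
  · rw [← sup_inf_assoc_of_le (u ⊔ v) (le_sup_right : r ≤ p ⊔ r), sup_comm u v, ← sup_assoc, v4,
      sup_right_comm, u4]
    exact inf_eq_right.2 (sup_le (le_sup_left.trans le_sup_left) le_sup_right)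

theorem fin_transfer {b c t : α} (hc : c ⊓ t = ⊥) (h : b ⊔ t = c ⊔ t)
    (hfin : (Set.Iic b).Finite) : (Set.Iic c).Finite := by
  refine Set.Finite.of_injOn (f := fun x => (x ⊔ t) ⊓ b) (t := Set.Iic b)
    (fun x _ => inf_le_right) ?_ hfin
  have key : ∀ x, x ≤ c → ((((x ⊔ t) ⊓ b) ⊔ t) ⊓ c) = x := by
    intro x hx
    have : ((x ⊔ t) ⊓ b) ⊔ t = x ⊔ t := by
      rw [inf_sup_assoc_of_le b (le_sup_right : t ≤ x ⊔ t), h]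
      exact inf_eq_left.2 (sup_le_sup_right hx t)
    rw [this, sup_inf_assoc_of_le t hx, inf_comm, hc, sup_bot_eq]
  intro x hx y hy hxy
  have hxy' : (x ⊔ t) ⊓ b = (y ⊔ t) ⊓ b := hxy
  rw [← key x hx, ← key y hy, hxy']

theorem fin_line {p q r : α} (hp : IsAtom p) (hq : IsAtom q) (hr : IsAtom r) (hpq : p ≠ q)
    (h : Persp q r) (hfin : (Set.Iic (p ⊔ q)).Finite) : (Set.Iic (p ⊔ r)).Finite := by
  by_cases hcol : r ≤ p ⊔ q
  · exact hfin.subset (Set.Iic_subset_Iic.2 (sup_le le_sup_left hcol))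
  have hcol2 : ¬ q ≤ p ⊔ r := fun h => hcol (by
    rw [exch hp hr hq h (Ne.symm hpq)]; exact le_sup_right)
  obtain ⟨t, t1, t2, t3, t4⟩ := h
  have tle : t ≤ q ⊔ r := t3 ▸ le_sup_right
  refine fin_transfer (t := t) ?_ ?_ hfin
  · rw [← le_bot_iff, ← t2]
    refine le_inf ?_ inf_le_right
    conv_rhs => rw [← meet_lines hq hcol2]
    exact inf_le_inf_left _ (by rwa [sup_comm])
  · rw [sup_assoc, sup_assoc, t3, t4]

end gen

section ol
variable {α : Type u} [Ortholattice α] [IsModularLattice α]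

theorem split {w x : α} (h : w ≤ x) : w ⊔ (w′ ⊓ x) = x := by
  rw [← sup_inf_assoc_of_le _ h, sup_compl, top_inf_eq]

theorem persp_or {p q : α} (hp : IsAtom p) (hq : IsAtom q) (h : ¬ Persp p q) : q ≤ p′ := by
  by_contra hn
  apply h
  have hpq : p ≠ q := by rintro rfl; exact h (Persp.refl p)
  have e : p ⊔ (p′ ⊓ (p ⊔ q)) = p ⊔ q := split le_sup_left
  have hqt : q ⊓ (p′ ⊓ (p ⊔ q)) = ⊥ := by
    rw [← inf_assoc, atom_inf hq hn, bot_inf_eq]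
  refine ⟨p′ ⊓ (p ⊔ q), ?_, hqt, e, ?_⟩
  · rw [← inf_assoc, inf_compl, bot_inf_eq]
  · have hcov : q ⋖ p ⊔ q := by
      apply covBy_sup_of_inf_covBy_left
      rw [(hp.disjoint_of_ne hq hpq).eq_bot]
      exact hp.bot_covBy
    rcases (sup_le le_sup_right inf_le_right : q ⊔ (p′ ⊓ (p ⊔ q)) ≤ p ⊔ q).lt_or_eq with h2 | h2
    · exfalso
      refine hcov.2 (left_lt_sup.2 fun h3 => ?_) h2
      have h4 : p′ ⊓ (p ⊔ q) = ⊥ := by rw [← hqt]; exact (inf_eq_right.2 h3).symm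
      rw [h4, sup_bot_eq] at e
      exact hpq ((hp.le_iff_eq hq.1).1 (e ▸ le_sup_right)).symm
    · exact h2

theorem le_compl_symm {x y : α} (h : x ≤ y′) : y ≤ x′ := by
  have := compl_antitone _ _ h
  rwa [Ortholattice.compl_compl] at this

theorem compl_inf_eq (x y : α) : (x ⊓ y)′ = x′ ⊔ y′ := by
  apply le_antisymm
  · have : (x′ ⊔ y′)′ ≤ x ⊓ y := by
      apply le_inf
      · have := compl_antitone _ _ (le_sup_left : x′ ≤ x′ ⊔ y′)
        rwa [Ortholattice.compl_compl] at this
      · have := compl_antitone _ _ (le_sup_right : y′ ≤ x′ ⊔ y′)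
        rwa [Ortholattice.compl_compl] at this
    have := compl_antitone _ _ this
    rwa [Ortholattice.compl_compl] at this
  · exact sup_le (compl_antitone _ _ inf_le_left) (compl_antitone _ _ inf_le_right)

def iicOL (z : α) : Ortholattice (Set.Iic z) where
  compl x := ⟨x.1′ ⊓ z, inf_le_right⟩
  compl_antitone x y h := by
    show x.1′ ⊓ z ≥ y.1′ ⊓ z
    exact inf_le_inf_right _ (compl_antitone _ _ h)
  compl_compl x := by
    apply Subtype.ext
    show (x.1′ ⊓ z)′ ⊓ z = x.1
    rw [compl_inf_eq, Ortholattice.compl_compl, sup_inf_assoc_of_le _ x.2, inf_comm, inf_compl,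
      sup_bot_eq]
  inf_compl x := by
    apply Subtype.ext
    show x.1 ⊓ (x.1′ ⊓ z) = ⊥
    rw [← inf_assoc, inf_compl, bot_inf_eq]
  sup_compl x := by
    apply Subtype.ext
    show x.1 ⊔ (x.1′ ⊓ z) = z
    exact split x.2

theorem central {z : α} (h : ∀ x : α, x ≤ (x ⊓ z) ⊔ (x ⊓ z′)) (hirr : DirectlyIrreducible α) :
    z = ⊥ ∨ z′ = ⊥ := by
  by_contra hcon
  push Not at hcon
  have key : ∀ (w : α), (∀ x : α, x ≤ (x ⊓ w) ⊔ (x ⊓ w′)) → ∀ x : α, x′ ⊓ w = (x ⊓ w)′ ⊓ w := by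
    intro w h x
    apply le_antisymm
    · exact inf_le_inf_right _ (compl_antitone _ _ inf_le_left)
    · rw [compl_inf_eq]
      have h1 : x′ ⊔ w′ ≤ (x′ ⊓ w) ⊔ w′ :=
        sup_le ((h _).trans (sup_le_sup_left inf_le_right _)) le_sup_right
      refine (inf_le_inf_right w h1).trans ?_
      rw [sup_inf_assoc_of_le _ inf_le_right, inf_comm w′, inf_compl, sup_bot_eq]
  have h' : ∀ x : α, x ≤ (x ⊓ z′) ⊔ (x ⊓ z′′) := by
    intro x
    rw [Ortholattice.compl_compl, sup_comm]
    exact h x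
  letI := iicOL z
  letI := iicOL z′
  have n1 : Nontrivial (Set.Iic z) :=
    ⟨⟨⟨⊥, bot_le⟩, ⟨z, le_rfl⟩, fun e => hcon.1 (congrArg Subtype.val e).symm⟩⟩
  have n2 : Nontrivial (Set.Iic z′) :=
    ⟨⟨⟨⊥, bot_le⟩, ⟨z′, le_rfl⟩, fun e => hcon.2 (congrArg Subtype.val e).symm⟩⟩
  refine (hirr.2 (Set.Iic z) (Set.Iic z′) n1 n2).false ?_
  refine
    { toFun := fun x => (⟨x ⊓ z, inf_le_right⟩, ⟨x ⊓ z′, inf_le_right⟩)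
      invFun := fun y => y.1.1 ⊔ y.2.1
      left_inv := ?_
      right_inv := ?_
      map_rel := ?_
      map_compl := ?_ }
  · intro x
    exact le_antisymm (sup_le inf_le_left inf_le_left) (h x)
  · rintro ⟨⟨a, ha⟩, ⟨b, hb⟩⟩
    have ha' : a ≤ z := ha
    have hb' : b ≤ z′ := hb
    apply Prod.ext <;> apply Subtype.ext
    · show (a ⊔ b) ⊓ z = a
      rw [sup_inf_assoc_of_le _ ha', sup_eq_left]
      exact (le_inf inf_le_right (inf_le_left.trans hb')).trans (by rw [inf_compl]; exact bot_le)
    · show (a ⊔ b) ⊓ z′ = b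
      rw [sup_comm, sup_inf_assoc_of_le _ hb', sup_eq_left]
      exact (inf_le_inf_right _ ha').trans (by rw [inf_compl]; exact bot_le)
  · intro x y
    constructor
    · intro hxy
      exact ⟨inf_le_inf_right z hxy, inf_le_inf_right z′ hxy⟩
    · rintro ⟨h1, h2⟩
      have h1' : x ⊓ z ≤ y ⊓ z := h1
      have h2' : x ⊓ z′ ≤ y ⊓ z′ := h2
      exact (h x).trans (sup_le (h1'.trans inf_le_left) (h2'.trans inf_le_left))
  · intro x
    apply Prod.ext <;> apply Subtype.ext
    · exact key z h x
    · exact key z′ h' x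

theorem exists_atom [WellFoundedLT α] {x : α} (hx : x ≠ ⊥) : ∃ p, IsAtom p ∧ p ≤ x := by
  have := (IsAtomic.eq_bot_or_exists_atom_le x)
  exact this.resolve_left hx

theorem le_of_atoms [WellFoundedLT α] {x w : α} (hw : w ≤ x)
    (h : ∀ p, IsAtom p → p ≤ x → p ≤ w) : x ≤ w := by
  by_cases h0 : w′ ⊓ x = ⊥
  · have := split hw
    rw [h0, sup_bot_eq] at this
    exact this.ge
  · exfalso
    obtain ⟨p, hp, hpx⟩ := exists_atom h0
    have h1 := h p hp (hpx.trans inf_le_right)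
    have h2 : p ≤ w ⊓ w′ := le_inf h1 (hpx.trans inf_le_left)
    rw [inf_compl] at h2
    exact hp.1 (le_bot_iff.1 h2)

theorem all_persp [WellFoundedLT α] (hirr : DirectlyIrreducible α) {p q : α} (hp : IsAtom p)
    (hq : IsAtom q) : Persp p q := by
  by_contra hn
  obtain ⟨z, hz⟩ := exists_minimal_of_wellFoundedLT
    (fun z : α => ∀ r, IsAtom r → Persp p r → r ≤ z) ⟨⊤, fun _ _ _ => le_top⟩
  have hleast : ∀ w, (∀ r, IsAtom r → Persp p r → r ≤ w) → z ≤ w := by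
    intro w hw
    have := hz.2 (y := z ⊓ w) (fun r h1 h2 => le_inf (hz.1 r h1 h2) (hw r h1 h2)) inf_le_left
    exact this.trans inf_le_right
  have hT : ∀ s, IsAtom s → ¬ Persp p s → s ≤ z′ := by
    intro s hs hps
    apply le_compl_symm
    apply hleast
    intro r hr hpr
    exact persp_or hs hr fun h => hps (hpr.trans hp hr hs h.symm)
  have hpz : p ≤ z := hz.1 p hp (Persp.refl p)
  have hqz : q ≤ z′ := hT q hq hn
  have hc : ∀ x : α, x ≤ (x ⊓ z) ⊔ (x ⊓ z′) := by
    intro x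
    apply le_of_atoms (sup_le inf_le_left inf_le_left)
    intro s hs hsx
    by_cases h : Persp p s
    · exact (le_inf hsx (hz.1 s hs h)).trans le_sup_left
    · exact (le_inf hsx (hT s hs h)).trans le_sup_right
  rcases central hc hirr with h | h
  · exact hp.1 (le_bot_iff.1 (h ▸ hpz))
  · exact hq.1 (le_bot_iff.1 (h ▸ hqz))

theorem fin_atoms [WellFoundedLT α]
    (hl : ∀ p q : α, IsAtom p → IsAtom q → (Set.Iic (p ⊔ q)).Finite) (c : α) :
    {q : α | IsAtom q ∧ q ≤ c}.Finite := by
  induction c using WellFoundedLT.induction with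
  | ind c ih =>
    by_cases hc : c = ⊥
    · refine Set.finite_empty.subset ?_
      rintro q ⟨hq, hqc⟩
      exact hq.1 (le_bot_iff.1 (hc ▸ hqc))
    obtain ⟨p, hp, hpc⟩ := exists_atom hc
    have e : p ⊔ (p′ ⊓ c) = c := split hpc
    have hlt : p′ ⊓ c < c := by
      refine lt_of_le_of_ne inf_le_right fun h => hp.1 ?_
      have : p ≤ p ⊓ p′ := le_inf le_rfl (hpc.trans (inf_eq_right.1 h))
      rw [inf_compl] at this
      exact le_bot_iff.1 this
    refine ((Set.finite_singleton p).union ((ih _ hlt).biUnion fun r hr => hl p r hp hr.1)).subset ?_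
    rintro q ⟨hq, hqc⟩
    by_cases hqp : q = p
    · exact Or.inl hqp
    right
    have e2 : p ⊔ ((p′ ⊓ c) ⊓ (p ⊔ q)) = p ⊔ q := by
      rw [← sup_inf_assoc_of_le _ (le_sup_left : p ≤ p ⊔ q), e]
      exact inf_eq_right.2 (sup_le hpc hqc)
    have h0 : (p′ ⊓ c) ⊓ (p ⊔ q) ≠ ⊥ := by
      intro h
      rw [h, sup_bot_eq] at e2
      exact hqp ((hp.le_iff_eq hq.1).1 (e2 ▸ le_sup_right))
    obtain ⟨r, hr, hrle⟩ := exists_atom h0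
    have hrp : r ≠ p := by
      rintro rfl
      have : r ≤ r ⊓ r′ := le_inf le_rfl (hrle.trans (inf_le_left.trans inf_le_left))
      rw [inf_compl] at this
      exact hr.1 (le_bot_iff.1 this)
    have e3 := exch hp hq hr (hrle.trans inf_le_right) hrp
    refine Set.mem_biUnion (x := r) ⟨hr, hrle.trans inf_le_left⟩ ?_
    show q ≤ p ⊔ r
    rw [e3]
    exact le_sup_right

end ol

end MolAux

open MolAux in
/-- Let `L` be a directly irreducible modular ortholattice of finite dimension `d ≥ 2`.
If some interval `[⊥, a]` of `L` of dimension `2` is finite, then `L` is finite. -/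
theorem stmt10 (α : Type u) [Ortholattice α] [IsModularLattice α]
    (hirr : DirectlyIrreducible α) (d : ℕ) (hd : 2 ≤ d) (hdim : HasDim α d)
    (a : α) (ha2 : HasDim (Set.Icc (⊥ : α) a) 2) (hfin : (Set.Icc (⊥ : α) a).Finite) :
    Finite α := by
  haveI := wf_of_dim hdim
  obtain ⟨p, q, hp, hq, hpq, hpqa⟩ : ∃ p q : α, IsAtom p ∧ IsAtom q ∧ p ≠ q ∧ p ⊔ q ≤ a := by
    obtain ⟨s, hs, hcard⟩ := ha2
    obtain ⟨x, hx1, hx2⟩ : ∃ x : Set.Icc (⊥ : α) a, x.1 ≠ ⊥ ∧ x.1 ≠ a := by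
      by_contra! hno
      have hsub : s ⊆ {⟨⊥, le_rfl, bot_le⟩, ⟨a, bot_le, le_rfl⟩} := by
        intro x _
        by_cases h : x.1 = ⊥
        · exact Or.inl (Subtype.ext h)
        · exact Or.inr (Subtype.ext (hno x h))
      have h1 := Set.ncard_le_ncard hsub (Set.toFinite _)
      have h2 := Set.ncard_insert_le (⟨⊥, le_rfl, bot_le⟩ : Set.Icc (⊥ : α) a)
        {⟨a, bot_le, le_rfl⟩}
      rw [Set.ncard_singleton] at h2
      omega
    obtain ⟨p, hp, hpx⟩ := exists_atom hx1
    have hpa : p ≤ a := hpx.trans x.2.2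
    have h0 : p′ ⊓ a ≠ ⊥ := by
      intro h
      have e := split hpa
      rw [h, sup_bot_eq] at e
      exact hx2 (le_antisymm x.2.2 (e ▸ hpx))
    obtain ⟨q, hq, hqle⟩ := exists_atom h0
    refine ⟨p, q, hp, hq, ?_, sup_le hpa (hqle.trans inf_le_right)⟩
    rintro rfl
    have : p ≤ p ⊓ p′ := le_inf le_rfl (hqle.trans inf_le_left)
    rw [Ortholattice.inf_compl] at this
    exact hp.1 (le_bot_iff.1 this)
  have hf0 : (Set.Iic (p ⊔ q)).Finite := hfin.subset fun x hx => ⟨bot_le, le_trans hx hpqa⟩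
  have hf1 : ∀ r, IsAtom r → (Set.Iic (p ⊔ r)).Finite := fun r hr =>
    fin_line hp hq hr hpq (all_persp hirr hq hr) hf0
  have hl : ∀ r s : α, IsAtom r → IsAtom s → (Set.Iic (r ⊔ s)).Finite := by
    intro r s hr hs
    by_cases hrp : r = p
    · exact hrp ▸ hf1 s hs
    · exact fin_line hr hp hs hrp (all_persp hirr hp hs) (by rw [sup_comm]; exact hf1 r hr)
  have hat : {r : α | IsAtom r}.Finite := (fin_atoms hl ⊤).subset fun r hr => ⟨hr, le_top⟩
  rw [← Set.finite_univ_iff]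
  refine Set.Finite.of_injOn (f := fun x : α => {r : α | IsAtom r ∧ r ≤ x})
    (t := 𝒫 {r : α | IsAtom r}) (fun x _ r hr => hr.1) ?_ hat.finite_subsets
  have key : ∀ x y : α, {r : α | IsAtom r ∧ r ≤ x} = {r : α | IsAtom r ∧ r ≤ y} → x ≤ y := by
    intro x y h
    refine (le_of_atoms (inf_le_left : x ⊓ y ≤ x) fun r hr hrx => ?_).trans inf_le_right
    have : r ∈ {r : α | IsAtom r ∧ r ≤ y} := h ▸ ⟨hr, hrx⟩
    exact le_inf hrx this.2
  intro x _ y _ hxy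
  exact le_antisymm (key x y hxy) (key y x hxy.symm)
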